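/- In the two-nested-model setting with known variance, the correction term Δ(ρζ/√(1−ρ²), K) − Δ(0, K) is strictly negative whenever ρζ ≠ 0 (and K > 0, |ρ| < 1), and zero when ρζ = 0; hence the coverage probability of the interval β̂_{1·M̂} ± Kσ_{1·M̂} for the true-parameter target β_{1·M₂} is strictly smaller than its coverage probability for the selected-model target β_{1·M̂} whenever ρζ ≠ 0, and equal otherwise. -/

import Mathlib

open MeasureTheory ProbabilityTheory Matrix
open scoped ENNReal NNReal Classical

/-- The Gaussian linear model measure: the law of `y = μ + u`, `u ~ N(0, σ²Iₙ)`. -/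
noncomputable def gaussianLinearModel {n : ℕ} (μ : Fin n → ℝ) (σ : ℝ) :
    Measure (Fin n → ℝ) :=
  Measure.pi fun i => gaussianReal (μ i) (Real.toNNReal (σ ^ 2))

/-- Standard normal cumulative distribution function `Φ`. -/
noncomputable def Phi (x : ℝ) : ℝ := ((gaussianReal 0 1) (Set.Iic x)).toReal

/-- `Δ(x, c) = Φ(x + c) − Φ(x − c)`. -/
noncomputable def Dlt (x c : ℝ) : ℝ := Phi (x + c) - Phi (x - c)

namespace TwoNested

variable {n : ℕ}

/-- `(X'X)⁻¹` for the full model `M₂ = {1, 2}`. -/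
noncomputable def Ai (X : Matrix (Fin n) (Fin 2) ℝ) : Matrix (Fin 2) (Fin 2) ℝ :=
  (Xᵀ * X)⁻¹

/-- Least-squares estimator in the full model `M₂`. -/
noncomputable def bhat2 (X : Matrix (Fin n) (Fin 2) ℝ) (y : Fin n → ℝ) : Fin 2 → ℝ :=
  (Ai X * Xᵀ) *ᵥ y

/-- Least-squares estimator in the restricted model `M₁ = {1}`. -/
noncomputable def bhat1 (X : Matrix (Fin n) (Fin 2) ℝ) (y : Fin n → ℝ) : ℝ :=
  (∑ i, X i 0 * y i) / (∑ i, X i 0 ^ 2)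

/-- `σ_{1·M₂} = σ √([(X'X)⁻¹]₁₁)`. -/
noncomputable def sd1M2 (X : Matrix (Fin n) (Fin 2) ℝ) (σ : ℝ) : ℝ :=
  σ * Real.sqrt (Ai X 0 0)

/-- `σ_{2·M₂} = σ √([(X'X)⁻¹]₂₂)`, the standard deviation of `β̂_{2·M₂}`. -/
noncomputable def sd2M2 (X : Matrix (Fin n) (Fin 2) ℝ) (σ : ℝ) : ℝ :=
  σ * Real.sqrt (Ai X 1 1)

/-- `σ_{1·M₁} = σ √((X₁'X₁)⁻¹)`. -/
noncomputable def sd1M1 (X : Matrix (Fin n) (Fin 2) ℝ) (σ : ℝ) : ℝ :=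
  σ * Real.sqrt (∑ i, X i 0 ^ 2)⁻¹

/-- The correlation `ρ` between the two components of `β̂_{M₂}`. -/
noncomputable def rho (X : Matrix (Fin n) (Fin 2) ℝ) : ℝ :=
  -(Ai X 0 1) / Real.sqrt (Ai X 0 0 * Ai X 1 1)

/-- `ζ = β_{2·M₂} / SD(β̂_{2·M₂})`. -/
noncomputable def zeta (X : Matrix (Fin n) (Fin 2) ℝ) (μ : Fin n → ℝ) (σ : ℝ) : ℝ :=
  bhat2 X μ 1 / sd2M2 X σ

/-- The coverage event for the selected-model target `β_{1·M̂}`, where `M̂ = M₂` iff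
`|β̂_{2·M₂}|/σ_{2·M₂} > C`, with interval `β̂_{1·M̂} ± K σ_{1·M̂}`. -/
def covSelEvent (X : Matrix (Fin n) (Fin 2) ℝ) (μ : Fin n → ℝ) (σ C K : ℝ) :
    Set (Fin n → ℝ) :=
  {y | if |bhat2 X y 1| / sd2M2 X σ > C
    then |bhat2 X y 0 - bhat2 X μ 0| ≤ K * sd1M2 X σ
    else |bhat1 X y - bhat1 X μ| ≤ K * sd1M1 X σ}

/-- The coverage event for the full-model target `β_{1·M₂}`, with the same selector
and the same interval `β̂_{1·M̂} ± K σ_{1·M̂}`. -/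
def covFullEvent (X : Matrix (Fin n) (Fin 2) ℝ) (μ : Fin n → ℝ) (σ C K : ℝ) :
    Set (Fin n → ℝ) :=
  {y | if |bhat2 X y 1| / sd2M2 X σ > C
    then |bhat2 X y 0 - bhat2 X μ 0| ≤ K * sd1M2 X σ
    else |bhat1 X y - bhat2 X μ 0| ≤ K * sd1M1 X σ}

end TwoNested

open TwoNested

instance glm_prob {n : ℕ} (μ : Fin n → ℝ) (σ : ℝ) :
    IsProbabilityMeasure (gaussianLinearModel μ σ) := by
  unfold gaussianLinearModel; infer_instance

lemma glm_indep {n : ℕ} (μ : Fin n → ℝ) (σ : ℝ) :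
    iIndepFun (fun (i : Fin n) (y : Fin n → ℝ) => y i) (gaussianLinearModel μ σ) :=
  iIndepFun_pi (X := fun _ => id) (fun _ => aemeasurable_id)

lemma glm_law {n : ℕ} (μ : Fin n → ℝ) (σ : ℝ) (i : Fin n) :
    HasLaw (fun y : Fin n → ℝ => y i) (gaussianReal (μ i) (Real.toNNReal (σ ^ 2)))
      (gaussianLinearModel μ σ) where
  aemeasurable := (measurable_pi_apply i).aemeasurable
  map_eq := (measurePreserving_eval
    (fun i => gaussianReal (μ i) (Real.toNNReal (σ ^ 2))) i).map_eq

lemma glm_gauss {n : ℕ} (μ : Fin n → ℝ) (σ : ℝ) :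
    HasGaussianLaw (fun y : Fin n → ℝ => y) (gaussianLinearModel μ σ) :=
  (glm_indep μ σ).hasGaussianLaw fun i => (glm_law μ σ i).hasGaussianLaw

lemma glm_cov {n : ℕ} (μ : Fin n → ℝ) (σ : ℝ) (a b : Fin n → ℝ) :
    cov[fun y => ∑ i, a i * y i, fun y => ∑ i, b i * y i; gaussianLinearModel μ σ] =
      σ ^ 2 * ∑ i, a i * b i := by
  have hm : ∀ i, MemLp (fun y : Fin n → ℝ => y i) 2 (gaussianLinearModel μ σ) := fun i =>
    (glm_law μ σ i).hasGaussianLaw.memLp_two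
  rw [covariance_fun_sum_fun_sum (fun i => (hm i).const_mul _) (fun i => (hm i).const_mul _),
    Finset.mul_sum]
  refine Finset.sum_congr rfl fun i _ => ?_
  rw [Finset.sum_eq_single i]
  · rw [covariance_const_mul_left, covariance_const_mul_right,
      covariance_self (measurable_pi_apply i).aemeasurable, (glm_law μ σ i).variance_eq, variance_id_gaussianReal,
      Real.coe_toNNReal _ (sq_nonneg σ)]
    ring
  · intro j _ hj
    rw [covariance_const_mul_left, covariance_const_mul_right,
      ((glm_indep μ σ).indepFun hj.symm).covariance_eq_zero (hm i) (hm j)]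
    simp
  · simp

lemma glm_pair {n : ℕ} (μ : Fin n → ℝ) (σ : ℝ) (a b : Fin n → ℝ) :
    HasGaussianLaw (fun y : Fin n → ℝ => (∑ i, a i * y i, ∑ i, b i * y i))
      (gaussianLinearModel μ σ) := by
  have := (glm_gauss μ σ).map_fun
    ((∑ i, a i • ContinuousLinearMap.proj (R := ℝ) (φ := fun _ : Fin n => ℝ) i).prod
      (∑ i, b i • ContinuousLinearMap.proj (R := ℝ) (φ := fun _ : Fin n => ℝ) i))
  simpa using this

lemma glm_mean {n : ℕ} (μ : Fin n → ℝ) (σ : ℝ) (a : Fin n → ℝ) :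
    ∫ y, (∑ i, a i * y i) ∂(gaussianLinearModel μ σ) = ∑ i, a i * μ i := by
  rw [integral_finsetSum]
  · refine Finset.sum_congr rfl fun i _ => ?_
    rw [integral_const_mul, (glm_law μ σ i).integral_eq, integral_id_gaussianReal]
  · intro i _
    exact (glm_law μ σ i).hasGaussianLaw.integrable.const_mul _

lemma glm_map {n : ℕ} (μ : Fin n → ℝ) (σ : ℝ) (a : Fin n → ℝ) :
    (gaussianLinearModel μ σ).map (fun y => ∑ i, a i * y i) =
      gaussianReal (∑ i, a i * μ i) (Real.toNNReal (σ ^ 2 * ∑ i, a i * a i)) := by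
  rw [(glm_pair μ σ a a).fst.map_eq_gaussianReal, glm_mean, ← glm_cov μ,
    covariance_self (glm_pair μ σ a a).fst.aemeasurable]

lemma Phi_sub {a b : ℝ} (hab : a ≤ b) :
    Phi b - Phi a = ((gaussianReal 0 1) (Set.Icc a b)).toReal := by
  have : NullSingletonClass (gaussianReal 0 1) := nullSingletonClass_gaussianReal one_ne_zero
  unfold Phi
  rw [← Set.Iic_union_Ioc_eq_Iic hab, measure_union (Set.Iic_disjoint_Ioc le_rfl)
    measurableSet_Ioc, ENNReal.toReal_add (measure_ne_top _ _) (measure_ne_top _ _),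
    measure_congr Ioc_ae_eq_Icc]
  ring

lemma Phi_sub' {a b : ℝ} (hab : a ≤ b) :
    Phi b - Phi a = ∫ x in a..b, gaussianPDFReal 0 1 x := by
  rw [Phi_sub hab, gaussianReal_apply_eq_integral _ one_ne_zero, ENNReal.toReal_ofReal,
    integral_Icc_eq_integral_Ioc, intervalIntegral.integral_of_le hab]
  exact setIntegral_nonneg measurableSet_Icc fun x _ => gaussianPDFReal_nonneg _ _ _

lemma pdf_cont : Continuous (gaussianPDFReal 0 1) := by
  unfold gaussianPDFReal; fun_prop

lemma pdf_lt {x y : ℝ} (h : x ^ 2 < y ^ 2) : gaussianPDFReal 0 1 y < gaussianPDFReal 0 1 x := by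
  unfold gaussianPDFReal
  apply mul_lt_mul_of_pos_left
  · apply Real.exp_lt_exp.2
    simp; linarith
  · positivity

lemma Dlt_lt_pos {x K : ℝ} (hx : 0 < x) (hK : 0 < K) : Dlt x K < Dlt 0 K := by
  have h1 := Phi_sub' (a := K) (b := x + K) (by linarith)
  have h2 := Phi_sub' (a := -K) (b := x - K) (by linarith)
  have h3 : ∫ t in (0:ℝ)..x, gaussianPDFReal 0 1 (t + K) =
      ∫ t in K..(x + K), gaussianPDFReal 0 1 t := by simp
  have h4 : ∫ t in (0:ℝ)..x, gaussianPDFReal 0 1 (t - K) =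
      ∫ t in (-K)..(x - K), gaussianPDFReal 0 1 t := by simp
  have h5 : ∫ t in (0:ℝ)..x, gaussianPDFReal 0 1 (t + K) <
      ∫ t in (0:ℝ)..x, gaussianPDFReal 0 1 (t - K) := by
    apply intervalIntegral.integral_lt_integral_of_continuousOn_of_le_of_exists_lt hx
    · exact (pdf_cont.comp (by fun_prop)).continuousOn
    · exact (pdf_cont.comp (by fun_prop)).continuousOn
    · intro t ht
      exact (pdf_lt (by nlinarith [ht.1])).le
    · exact ⟨x, ⟨hx.le, le_rfl⟩, pdf_lt (by nlinarith)⟩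
  simp only [Dlt, zero_add, zero_sub]
  linarith

lemma Dlt_neg (x : ℝ) {K : ℝ} (hK : 0 < K) : Dlt (-x) K = Dlt x K := by
  unfold Dlt
  rw [Phi_sub' (by linarith), Phi_sub' (by linarith)]
  have := intervalIntegral.integral_comp_neg (a := x - K) (b := x + K) (gaussianPDFReal 0 1)
  have h : ∀ t, gaussianPDFReal 0 1 (-t) = gaussianPDFReal 0 1 t := by
    intro t; simp [gaussianPDFReal]
  simp only [h] at this
  rw [this]; congr 1 <;> ring

lemma Dlt_lt {x K : ℝ} (hx : x ≠ 0) (hK : 0 < K) : Dlt x K < Dlt 0 K := by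
  rcases lt_or_gt_of_ne hx with h | h
  · rw [← Dlt_neg x hK]; exact Dlt_lt_pos (by linarith) hK
  · exact Dlt_lt_pos h hK

lemma gauss_cov (m t : ℝ) {s K : ℝ} (hs : 0 < s) (hK : 0 < K) :
    ((gaussianReal m (Real.toNNReal (s ^ 2))) {u | |u - t| ≤ K * s}).toReal =
      Dlt ((t - m) / s) K := by
  have hv : (gaussianReal 0 1).map (fun z => m + s * z) = gaussianReal m (Real.toNNReal (s ^ 2)) := by
    have h1 := gaussianReal_map_const_mul (μ := 0) (v := 1) s
    have h2 := gaussianReal_map_const_add (μ := 0) (v := Real.toNNReal (s ^ 2)) m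
    rw [zero_add] at h2
    have h3 := Measure.map_map (μ := gaussianReal 0 1) (g := fun z : ℝ => m + z)
      (f := fun z : ℝ => s * z) (by fun_prop) (by fun_prop)
    rw [← h2]
    refine h3.symm.trans ?_
    rw [h1]
    congr 2
    · simp
    · ext; simp [sq_nonneg]
  rw [← hv, Measure.map_apply (by fun_prop) (measurableSet_le (by fun_prop) (by fun_prop)), Dlt,
    Phi_sub (by linarith)]
  congr 2
  ext z
  simp only [Set.mem_preimage, Set.mem_ofPred_eq, Set.mem_Icc, abs_le]
  have : (t - m) / s * s = t - m := by field_simp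
  constructor
  · rintro ⟨h1, h2⟩
    constructor
    · by_contra! h; nlinarith
    · by_contra! h; nlinarith
  · rintro ⟨h1, h2⟩
    constructor <;> nlinarith

lemma gram_posDef {n : ℕ} (X : Matrix (Fin n) (Fin 2) ℝ) (hrank : X.rank = 2) :
    (Xᵀ * X).PosDef := by
  have hps : (Xᵀ * X).PosSemidef := by
    have := Matrix.posSemidef_conjTranspose_mul_self X
    rwa [Matrix.conjTranspose_eq_transpose_of_trivial] at this
  refine hps.posDef_iff_isUnit.2 ?_
  rw [← Matrix.mulVec_surjective_iff_isUnit]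
  have h := Matrix.rank_transpose_mul_self X
  rw [hrank, Matrix.rank] at h
  have h2 : LinearMap.range (Xᵀ * X).mulVecLin = ⊤ :=
    Submodule.eq_top_of_finrank_eq (by rw [h]; simp)
  exact LinearMap.range_eq_top.1 h2

lemma split_measure {Ω : Type*} [MeasurableSpace Ω] (P : Measure Ω) {U V : Ω → ℝ}
    (hU : Measurable U) (hV : Measurable V) (hUV : IndepFun U V P) {S B : Set ℝ} (A : Set Ω)
    (hS : MeasurableSet S) (hB : MeasurableSet B) :
    P {y | if V y ∈ S then y ∈ A else U y ∈ B} =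
      P (A ∩ V ⁻¹' S) + P (U ⁻¹' B) * P (V ⁻¹' Sᶜ) := by
  rw [← hUV.measure_inter_preimage_eq_mul _ _ hB hS.compl,
    ← measure_inter_add_diff _ (hV hS)]
  congr 2
  · ext y
    by_cases h : V y ∈ S <;> simp [h]
  · ext y
    by_cases h : V y ∈ S <;> simp [h]

lemma rho_zeta_iff {n : ℕ} (X : Matrix (Fin n) (Fin 2) ℝ) (hrank : X.rank = 2)
    (μ : Fin n → ℝ) (σ : ℝ) (hσ : 0 < σ) :
    rho X * zeta X μ σ = 0 ↔ bhat2 X μ 0 - bhat1 X μ = 0 := by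
  have hG := gram_posDef X hrank
  have hA : (Ai X).PosDef := hG.inv
  have h00 : 0 < Ai X 0 0 := hA.diag_pos
  have h11 : 0 < Ai X 1 1 := hA.diag_pos
  have hdet : 0 < (Xᵀ * X).det := hG.det_pos
  have hu : IsUnit (Xᵀ * X).det := hdet.ne'.isUnit
  have hG00 : 0 < (Xᵀ * X) 0 0 := hG.diag_pos
  have hGe : (Xᵀ * X) 0 0 = ∑ i, X i 0 ^ 2 := by
    simp [Matrix.mul_apply, sq]
  have h01 : Ai X 0 1 = -((Xᵀ * X).det⁻¹ * (Xᵀ * X) 0 1) := by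
    rw [Ai, Matrix.inv_def, Matrix.adjugate_fin_two]
    simp
  have hne : (Xᵀ * X) *ᵥ bhat2 X μ = Xᵀ *ᵥ μ := by
    rw [bhat2, Matrix.mulVec_mulVec, Ai, ← Matrix.mul_assoc, Matrix.mul_nonsing_inv _ hu,
      Matrix.one_mul]
  have hne0 := congrFun hne 0
  have e1 : (Xᵀ *ᵥ μ) 0 = ∑ i, X i 0 * μ i := by
    simp [Matrix.mulVec, dotProduct]
  rw [e1] at hne0
  have e2 : ((Xᵀ * X) *ᵥ bhat2 X μ) 0 =
      (Xᵀ * X) 0 0 * bhat2 X μ 0 + (Xᵀ * X) 0 1 * bhat2 X μ 1 := by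
    simp [Matrix.mulVec, dotProduct, Fin.sum_univ_two]
  rw [e2] at hne0
  have hd : bhat2 X μ 0 - bhat1 X μ = -((Xᵀ * X) 0 1 * bhat2 X μ 1) / (Xᵀ * X) 0 0 := by
    rw [bhat1, ← hGe, ← hne0]
    field_simp
    ring
  have hs : Real.sqrt (Ai X 0 0 * Ai X 1 1) ≠ 0 := (Real.sqrt_pos.2 (by positivity)).ne'
  have hs2 : Real.sqrt (Ai X 1 1) ≠ 0 := (Real.sqrt_pos.2 h11).ne'
  rw [hd, rho, zeta, sd2M2, h01]
  simp [hs, hs2, hσ.ne', hG00.ne', hdet.ne']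

lemma cov_event_measure {n : ℕ} (X : Matrix (Fin n) (Fin 2) ℝ) (hrank : X.rank = 2)
    (μ : Fin n → ℝ) (σ : ℝ) (hσ : 0 < σ) (C K : ℝ) (hC : 0 < C) (hK : 0 < K) :
    ∃ a b : ℝ, 0 < b ∧ ∀ t : ℝ,
      (gaussianLinearModel μ σ {y | if |bhat2 X y 1| / sd2M2 X σ > C
        then |bhat2 X y 0 - bhat2 X μ 0| ≤ K * sd1M2 X σ
        else |bhat1 X y - t| ≤ K * sd1M1 X σ}).toReal =
        a + Dlt ((t - bhat1 X μ) / sd1M1 X σ) K * b := by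
  have hG := gram_posDef X hrank
  have hA : (Ai X).PosDef := hG.inv
  have h11 : 0 < Ai X 1 1 := hA.diag_pos
  have hu : IsUnit (Xᵀ * X).det := hG.det_pos.ne'.isUnit
  have hG00 : 0 < (Xᵀ * X) 0 0 := hG.diag_pos
  have hGe : (Xᵀ * X) 0 0 = ∑ i, X i 0 ^ 2 := by
    simp [Matrix.mul_apply, sq]
  rw [hGe] at hG00
  have hsd2 : 0 < sd2M2 X σ := mul_pos hσ (Real.sqrt_pos.2 h11)
  have hsd1 : 0 < sd1M1 X σ := mul_pos hσ (Real.sqrt_pos.2 (inv_pos.2 hG00))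
  set w : Fin n → ℝ := fun i => (Ai X * Xᵀ) 1 i with hw
  set u : Fin n → ℝ := fun i => X i 0 / ∑ i, X i 0 ^ 2 with hu'
  have hV : ∀ y, bhat2 X y 1 = ∑ i, w i * y i := fun y => rfl
  have hU : ∀ y, bhat1 X y = ∑ i, u i * y i := by
    intro y
    rw [bhat1, Finset.sum_div]
    exact Finset.sum_congr rfl fun i _ => by rw [hu']; ring
  have hAG : Ai X * Xᵀ * X = 1 := by
    rw [Matrix.mul_assoc, Ai, Matrix.nonsing_inv_mul _ hu]
  have hw0 : ∑ i, w i * X i 0 = 0 := by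
    have := congrFun (congrFun hAG 1) 0
    rw [Matrix.mul_apply] at this
    simpa using this
  have hw1 : ∑ i, w i * X i 1 = 1 := by
    have := congrFun (congrFun hAG 1) 1
    rw [Matrix.mul_apply] at this
    simpa using this
  have hww : 0 < ∑ i, w i * w i := by
    refine lt_of_le_of_ne (Finset.sum_nonneg fun i _ => mul_self_nonneg _) ?_
    intro h
    have h2 := (Finset.sum_eq_zero_iff_of_nonneg (fun i _ => mul_self_nonneg (w i))).1 h.symm
    have h3 : ∀ i, w i = 0 := fun i => mul_self_eq_zero.1 (h2 i (Finset.mem_univ i))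
    simp [h3] at hw1
  have huw : ∑ i, u i * w i = 0 := by
    have : ∑ i, u i * w i = (∑ i, w i * X i 0) / ∑ i, X i 0 ^ 2 := by
      rw [Finset.sum_div]
      exact Finset.sum_congr rfl fun i _ => by rw [hu']; ring
    rw [this, hw0, zero_div]
  have huu : ∑ i, u i * u i = (∑ i, X i 0 ^ 2)⁻¹ := by
    have : ∑ i, u i * u i = (∑ i, X i 0 ^ 2) / (∑ i, X i 0 ^ 2) ^ 2 := by
      rw [Finset.sum_div]
      exact Finset.sum_congr rfl fun i _ => by rw [hu']; ring
    rw [this]; field_simp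
  set P := gaussianLinearModel μ σ with hP
  have hUm : Measurable (bhat1 X) := by
    unfold bhat1
    fun_prop
  have hVm : Measurable (fun y => bhat2 X y 1) := by
    simp only [hV]
    fun_prop
  have hind : IndepFun (bhat1 X) (fun y => bhat2 X y 1) P := by
    have h := (glm_pair μ σ u w).indepFun_of_covariance_eq_zero
      (by rw [glm_cov, huw, mul_zero])
    have e1 : bhat1 X = fun y => ∑ i, u i * y i := funext hU
    have e2 : (fun y => bhat2 X y 1) = fun y => ∑ i, w i * y i := funext hV
    rw [e1, e2]; exact h
  have hUlaw : P.map (bhat1 X) = gaussianReal (bhat1 X μ) (Real.toNNReal (sd1M1 X σ ^ 2)) := by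
    have e1 : bhat1 X = fun y => ∑ i, u i * y i := funext hU
    have e3 : sd1M1 X σ ^ 2 = σ ^ 2 * ∑ i, u i * u i := by
      rw [sd1M1, mul_pow, Real.sq_sqrt (inv_pos.2 hG00).le, huu]
    rw [e3, hU μ, ← glm_map μ σ u, e1]
  set S : Set ℝ := {v | |v| / sd2M2 X σ > C} with hS
  have hSm : MeasurableSet S := measurableSet_lt (by fun_prop) (by fun_prop)
  refine ⟨(P ({y | |bhat2 X y 0 - bhat2 X μ 0| ≤ K * sd1M2 X σ} ∩
    (fun y => bhat2 X y 1) ⁻¹' S)).toReal, (P ((fun y => bhat2 X y 1) ⁻¹' Sᶜ)).toReal, ?_, ?_⟩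
  · refine ENNReal.toReal_pos ?_ (measure_ne_top _ _)
    rw [← Measure.map_apply hVm hSm.compl]
    have e2 : (fun y => bhat2 X y 1) = fun y => ∑ i, w i * y i := funext hV
    rw [e2, glm_map]
    intro h0
    have hv : Real.toNNReal (σ ^ 2 * ∑ i, w i * w i) ≠ 0 := by
      rw [Ne, Real.toNNReal_eq_zero, not_le]; positivity
    have h1 := gaussianReal_absolutelyContinuous' (∑ i, w i * μ i) hv h0
    have h2 : Set.Icc 0 (C * sd2M2 X σ) ⊆ Sᶜ := by
      intro v hv
      simp only [hS, Set.mem_compl_iff, Set.mem_ofPred_eq, not_lt, gt_iff_lt]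
      rw [abs_of_nonneg hv.1, div_le_iff₀ hsd2]
      exact hv.2
    have h3 := measure_mono_null h2 h1
    rw [Real.volume_Icc, ENNReal.ofReal_eq_zero] at h3
    have : 0 < C * sd2M2 X σ := mul_pos hC hsd2
    linarith
  · intro t
    have hB : MeasurableSet {v : ℝ | |v - t| ≤ K * sd1M1 X σ} :=
      measurableSet_le (by fun_prop) (by fun_prop)
    have h := split_measure P hUm hVm hind
      {y | |bhat2 X y 0 - bhat2 X μ 0| ≤ K * sd1M2 X σ} hSm hB
    rw [← Measure.map_apply hUm hB, hUlaw] at h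
    have h' := congrArg ENNReal.toReal h
    rw [ENNReal.toReal_add (measure_ne_top _ _)
      (ENNReal.mul_ne_top (measure_ne_top _ _) (measure_ne_top _ _)), ENNReal.toReal_mul,
      gauss_cov _ _ hsd1 hK] at h'
    exact h'

/-- in the two-nested-model setting with known variance, the correction term
`Δ(ρζ/√(1−ρ²), K) − Δ(0, K)` is strictly negative whenever `ρζ ≠ 0` (for `K > 0`,
`|ρ| < 1`) and zero when `ρζ = 0`; hence the coverage probability of
`β̂_{1·M̂} ± Kσ_{1·M̂}` for the target `β_{1·M₂}` is strictly smaller than that for the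
target `β_{1·M̂}` whenever `ρζ ≠ 0`, and the two are equal otherwise. -/
theorem correction_term_sign {n : ℕ} (X : Matrix (Fin n) (Fin 2) ℝ)
    (hrank : X.rank = 2) (μ : Fin n → ℝ) (σ : ℝ) (hσ : 0 < σ)
    (C K : ℝ) (hC : 0 < C) (hK : 0 < K) (hρ : |rho X| < 1) :
    (rho X * zeta X μ σ ≠ 0 →
      Dlt (rho X * zeta X μ σ / Real.sqrt (1 - rho X ^ 2)) K - Dlt 0 K < 0 ∧
      (gaussianLinearModel μ σ (covFullEvent X μ σ C K)).toReal <
        (gaussianLinearModel μ σ (covSelEvent X μ σ C K)).toReal)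
    ∧ (rho X * zeta X μ σ = 0 →
      Dlt (rho X * zeta X μ σ / Real.sqrt (1 - rho X ^ 2)) K - Dlt 0 K = 0 ∧
      gaussianLinearModel μ σ (covFullEvent X μ σ C K) =
        gaussianLinearModel μ σ (covSelEvent X μ σ C K)) := by
  have hiff := rho_zeta_iff X hrank μ σ hσ
  have hG := gram_posDef X hrank
  have hG00 : 0 < (Xᵀ * X) 0 0 := hG.diag_pos
  have hGe : (Xᵀ * X) 0 0 = ∑ i, X i 0 ^ 2 := by
    simp [Matrix.mul_apply, sq]
  rw [hGe] at hG00
  have hsd1 : 0 < sd1M1 X σ := mul_pos hσ (Real.sqrt_pos.2 (inv_pos.2 hG00))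
  have hs : 0 < Real.sqrt (1 - rho X ^ 2) := by
    apply Real.sqrt_pos.2
    have := (sq_lt_one_iff_abs_lt_one (rho X)).2 hρ
    linarith
  constructor
  · intro h
    refine ⟨sub_neg.2 (Dlt_lt (div_ne_zero h hs.ne') hK), ?_⟩
    obtain ⟨a, b, hb, hab⟩ := cov_event_measure X hrank μ σ hσ C K hC hK
    rw [covFullEvent, covSelEvent, hab, hab]
    have hne : (bhat2 X μ 0 - bhat1 X μ) / sd1M1 X σ ≠ 0 :=
      div_ne_zero (fun h0 => h (hiff.2 h0)) hsd1.ne'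
    have := mul_lt_mul_of_pos_right (Dlt_lt hne hK) hb
    rw [sub_self, zero_div]
    linarith
  · intro h
    refine ⟨by rw [h, zero_div, sub_self], ?_⟩
    have h2 := sub_eq_zero.1 (hiff.1 h)
    rw [covFullEvent, covSelEvent, ← h2]
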